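/- Unilateral Liouville property: let M_a be of class 𝒜̄ and write â_j = (a_1+…+a_n) − a_j. (i) If a_1 = â_1 and u is an upper semicontinuous viscosity subsolution of M_a(D²u) = 0 in ℝⁿ∖{0} which is bounded above, then u is constant. (ii) If a_1 > â_1 and u is an upper semicontinuous viscosity subsolution of M_a(D²u) = 0 in all of ℝⁿ which is bounded above, then u is constant. (iii) If a_n = â_n and v is a lower semicontinuous viscosity supersolution of M_a(D²v) = 0 in ℝⁿ∖{0} which is bounded below, then v is constant. (iv) If a_n > â_n and v is a lower semicontinuous viscosity supersolution of M_a(D²v) = 0 in all of ℝⁿ which is bounded below, then v is constant. -/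

import Mathlib

open Set Metric MeasureTheory Filter

noncomputable section

/-- Euclidean `n`-space `ℝⁿ`. -/
abbrev En (n : ℕ) : Type := EuclideanSpace ℝ (Fin n)

/-- The eigenvalues of a (symmetric) matrix, arranged in nondecreasing order. -/
noncomputable def sortedEig {n : ℕ} (X : Matrix (Fin n) (Fin n) ℝ) : Fin n → ℝ :=
  if hX : X.IsHermitian then fun i => hX.eigenvalues (Tuple.sort hX.eigenvalues i) else 0

/-- The weighted partial trace operator `M_a(X) = Σ a_i λ_i(X)`. -/
noncomputable def Ma {n : ℕ} (a : Fin n → ℝ) (X : Matrix (Fin n) (Fin n) ℝ) : ℝ :=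
  ∑ i, a i * sortedEig X i

/-- The last index of `Fin n`. -/
def lastIdx (n : ℕ) [NeZero n] : Fin n :=
  ⟨n - 1, Nat.sub_lt (Nat.pos_of_ne_zero (NeZero.ne n)) Nat.one_pos⟩

/-- The class 𝒜̄ : all weights nonnegative, some weight positive. -/
def ClassAbar {n : ℕ} (a : Fin n → ℝ) : Prop := (∀ i, 0 ≤ a i) ∧ ∃ i, 0 < a i

/-- The class 𝒜 : nonnegative weights with `a 1 > 0` and `a n > 0`. -/
def ClassA {n : ℕ} [NeZero n] (a : Fin n → ℝ) : Prop :=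
  (∀ i, 0 ≤ a i) ∧ 0 < a 0 ∧ 0 < a (lastIdx n)

/-- The class 𝒜₁ : nonnegative weights with `a 1 > 0`. -/
def ClassA1 {n : ℕ} [NeZero n] (a : Fin n → ℝ) : Prop := (∀ i, 0 ≤ a i) ∧ 0 < a 0

/-- The class 𝒜ₙ : nonnegative weights with `a n > 0`. -/
def ClassAn {n : ℕ} [NeZero n] (a : Fin n → ℝ) : Prop :=
  (∀ i, 0 ≤ a i) ∧ 0 < a (lastIdx n)

/-- `a* = min (a 1) (a n)`. -/
noncomputable def aStar {n : ℕ} [NeZero n] (a : Fin n → ℝ) : ℝ := min (a 0) (a (lastIdx n))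

/-- `â_j = (a 1 + ⋯ + a n) - a j`. -/
noncomputable def hatA {n : ℕ} (a : Fin n → ℝ) (j : Fin n) : ℝ := (∑ i, a i) - a j

/-- The Hessian matrix of `φ` at `x`. -/
noncomputable def hess {n : ℕ} (φ : En n → ℝ) (x : En n) : Matrix (Fin n) (Fin n) ℝ :=
  fun i j => iteratedFDeriv ℝ 2 φ x ![EuclideanSpace.single i 1, EuclideanSpace.single j 1]

/-- The Hessian matrix of `φ` at `x`, with derivatives taken within `Ω`. -/
noncomputable def hessOn {n : ℕ} (Ω : Set (En n)) (φ : En n → ℝ) (x : En n) :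
    Matrix (Fin n) (Fin n) ℝ :=
  fun i j =>
    iteratedFDerivWithin ℝ 2 φ Ω x ![EuclideanSpace.single i 1, EuclideanSpace.single j 1]

/-- `u` is a viscosity subsolution of `M_a(D²u) = f` in `Ω`. -/
def IsViscSubsol {n : ℕ} (a : Fin n → ℝ) (Ω : Set (En n)) (f u : En n → ℝ) : Prop :=
  ∀ x₀ ∈ Ω, ∀ φ : En n → ℝ, ContDiff ℝ 2 φ →
    IsLocalMaxOn (fun x => u x - φ x) Ω x₀ → f x₀ ≤ Ma a (hess φ x₀)

/-- `u` is a viscosity supersolution of `M_a(D²u) = f` in `Ω`. -/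
def IsViscSupersol {n : ℕ} (a : Fin n → ℝ) (Ω : Set (En n)) (f u : En n → ℝ) : Prop :=
  ∀ x₀ ∈ Ω, ∀ φ : En n → ℝ, ContDiff ℝ 2 φ →
    IsLocalMinOn (fun x => u x - φ x) Ω x₀ → Ma a (hess φ x₀) ≤ f x₀

/-- `u` is a (continuous) viscosity solution of `M_a(D²u) = f` in `Ω`. -/
def IsViscSolution {n : ℕ} (a : Fin n → ℝ) (Ω : Set (En n)) (f u : En n → ℝ) : Prop :=
  ContinuousOn u Ω ∧ IsViscSubsol a Ω f u ∧ IsViscSupersol a Ω f u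

/-- The `L^p` norm of `f` on `D`. -/
noncomputable def lpNormOn {n : ℕ} (p : ℝ) (D : Set (En n)) (f : En n → ℝ) : ℝ :=
  (∫ x in D, |f x| ^ p) ^ (1 / p)

/-- The sup norm of `f` on `D`. -/
noncomputable def supAbsOn {n : ℕ} (D : Set (En n)) (f : En n → ℝ) : ℝ :=
  sSup ((fun x => |f x|) '' D)

/-- The Hölder seminorm `[h]_{β,D}`. -/
noncomputable def holderSemi {n : ℕ} (β : ℝ) (D : Set (En n)) (h : En n → ℝ) : ℝ :=
  sSup {r | ∃ x ∈ D, ∃ y ∈ D, x ≠ y ∧ r = |h x - h y| / ‖x - y‖ ^ β}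

/-- The Hölder norm `‖g‖_{C^β(D)} = sup_D |g| + [g]_{β,D}`. -/
noncomputable def cBetaNorm {n : ℕ} (β : ℝ) (D : Set (En n)) (g : En n → ℝ) : ℝ :=
  supAbsOn D g + holderSemi β D g

/-- `g` is `β`-Hölder continuous on `D`. -/
def HolderOn {n : ℕ} (β : ℝ) (D : Set (En n)) (g : En n → ℝ) : Prop :=
  ∃ K : ℝ, ∀ x ∈ D, ∀ y ∈ D, |g x - g y| ≤ K * ‖x - y‖ ^ β

/-- The `C^{1,β}(D)` norm: `sup|g| + sup|Dg| + [Dg]_{β,D}`. -/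
noncomputable def c1BetaNorm {n : ℕ} (β : ℝ) (D : Set (En n)) (g : En n → ℝ) : ℝ :=
  supAbsOn D g + sSup ((fun x => ‖fderiv ℝ g x‖) '' D) +
    sSup {r | ∃ x ∈ D, ∃ y ∈ D, x ≠ y ∧ r = ‖fderiv ℝ g x - fderiv ℝ g y‖ / ‖x - y‖ ^ β}

/-- `g ∈ C^{1,β}(D)`: differentiable with `β`-Hölder derivative on `D`. -/
def C1HolderOn {n : ℕ} (β : ℝ) (D : Set (En n)) (g : En n → ℝ) : Prop :=
  ContDiff ℝ 1 g ∧ ∃ K : ℝ, ∀ x ∈ D, ∀ y ∈ D,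
    ‖fderiv ℝ g x - fderiv ℝ g y‖ ≤ K * ‖x - y‖ ^ β

/-- Uniform exterior sphere condition with radius `R`: every boundary point lies on the
boundary of a closed ball of radius `R` containing `Ω̄`. -/
def ExtSphere {n : ℕ} (Ω : Set (En n)) (R : ℝ) : Prop :=
  ∀ y ∈ frontier Ω, ∃ z : En n, dist y z = R ∧ closure Ω ⊆ closedBall z R

/-- The cone `Σ_θ = {x : xₙ ≥ |x| cos θ}`. -/
def coneSet (n : ℕ) [NeZero n] (θ : ℝ) : Set (En n) := {x | ‖x‖ * Real.cos θ ≤ x (lastIdx n)}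

/-- Uniform exterior cone condition. -/
def ExtCone {n : ℕ} [NeZero n] (Ω : Set (En n)) : Prop :=
  ∃ θ₀ ∈ Set.Ioo (0 : ℝ) Real.pi, ∃ r₀ > (0 : ℝ), ∀ y ∈ frontier Ω,
    ∃ O : En n ≃ₗᵢ[ℝ] En n,
      closure Ω ∩ ball y r₀ ⊆ (fun x => y + O x) '' coneSet n θ₀

/-- Uniform Lipschitz boundary with Lipschitz constant `L`: near each boundary point, in
suitable rotated coordinates, `Ω` is the region above the graph of an `L`-Lipschitz
function. -/
def LipschitzBoundary {n : ℕ} [NeZero n] (Ω : Set (En n)) (L : ℝ) : Prop :=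
  ∃ r₀ > (0 : ℝ), ∀ y ∈ frontier Ω, ∃ O : En n ≃ₗᵢ[ℝ] En n, ∃ ψ : En n → ℝ,
    LipschitzWith (Real.toNNReal L) ψ ∧
    ∀ x ∈ ball (0 : En n) r₀,
      (y + O x ∈ Ω ↔ ψ (x - EuclideanSpace.single (lastIdx n) (x (lastIdx n))) < x (lastIdx n))

/-- The open cube of edge `ℓ` centered at the origin. -/
def cube (n : ℕ) (ℓ : ℝ) : Set (En n) := {x | ∀ i, |x i| < ℓ / 2}

/-- The upper concave envelope of `u` in `Ω`: the smallest concave function `≥ u` in `Ω`. -/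
noncomputable def upperEnvelope {n : ℕ} (Ω : Set (En n)) (u : En n → ℝ) : En n → ℝ :=
  fun x => sInf {t | ∃ φ : En n → ℝ, ConcaveOn ℝ Ω φ ∧ (∀ z ∈ Ω, u z ≤ φ z) ∧ t = φ x}

/-- The lower convex envelope of `u` in `Ω`: the largest convex function `≤ u` in `Ω`. -/
noncomputable def lowerEnvelope {n : ℕ} (Ω : Set (En n)) (u : En n → ℝ) : En n → ℝ :=
  fun x => sSup {t | ∃ φ : En n → ℝ, ConvexOn ℝ Ω φ ∧ (∀ z ∈ Ω, φ z ≤ u z) ∧ t = φ x}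

end

/-!
Writing `λ_min`, `λ_max` for the extreme eigenvalues, nonnegativity of the weights gives
`M_a(X) ≤ a₁ λ_min(X) + â₁ λ_max(X)`, so a subsolution of `M_a(D²u) = 0` is a subsolution of an
operator which depends only on the two extreme eigenvalues and is explicit on radial functions.
If `a₁ > â₁`, then `ε |x - y| ^ (2c)` with small `c` is a strict supersolution away from `y`, so
`u x - ε |x - y| ^ (2c)` has its maximum at `x = y`; letting `ε → 0` gives `u x ≤ u y`. If
`a₁ = â₁`, the power degenerates to a logarithm, and `log (1 + log² |x|²)`, which blows up both at
`0` and at `∞`, is a strict supersolution where `|log |x|²| > 1`. Hence `u` attains its supremum on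
the annulus `|log |x|²| ≤ 1` and is constant by the strong maximum principle. The dual bound with
`aₙ`, `âₙ` gives the same for `-v`.
-/

open scoped RealInnerProductSpace Topology

section SpectralBounds

section Eigenbasis

variable {ι E : Type*} [Fintype ι] [NormedAddCommGroup E] [InnerProductSpace ℝ E]
  {b : OrthonormalBasis ι ℝ E} {T : E →ₗ[ℝ] E} {l : ι → ℝ}

theorem inner_apply_self_eq_sum_of_eigenbasis (hT : ∀ i, T (b i) = l i • b i) (w : E) :
    ⟪w, T w⟫ = ∑ i, l i * ⟪b i, w⟫ ^ 2 := by
  nth_rw 2 [← b.sum_repr' w]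
  simp only [map_sum, map_smul, hT, inner_sum, real_inner_smul_right, real_inner_comm w]
  exact Finset.sum_congr rfl fun i _ ↦ by ring

theorem inner_apply_self_le_of_eigenbasis (hT : ∀ i, T (b i) = l i • b i) {μ : ℝ}
    (hl : ∀ i, l i ≤ μ) (w : E) : ⟪w, T w⟫ ≤ μ * ‖w‖ ^ 2 := by
  rw [inner_apply_self_eq_sum_of_eigenbasis hT, ← b.sum_sq_inner_right, Finset.mul_sum]
  gcongr with i
  exact hl i

theorem le_inner_apply_self_of_eigenbasis (hT : ∀ i, T (b i) = l i • b i) {μ : ℝ}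
    (hl : ∀ i, μ ≤ l i) (w : E) : μ * ‖w‖ ^ 2 ≤ ⟪w, T w⟫ := by
  rw [inner_apply_self_eq_sum_of_eigenbasis hT, ← b.sum_sq_inner_right, Finset.mul_sum]
  gcongr with i
  exact hl i

end Eigenbasis

variable {n : ℕ} {X : Matrix (Fin n) (Fin n) ℝ}

theorem le_lastIdx [NeZero n] (i : Fin n) : i ≤ lastIdx n :=
  Nat.le_sub_one_of_lt i.2

theorem monotone_sortedEig (X : Matrix (Fin n) (Fin n) ℝ) : Monotone (sortedEig X) := by
  unfold sortedEig
  split_ifs with hX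
  · exact Tuple.monotone_sort hX.eigenvalues
  · exact monotone_const

theorem exists_orthonormalBasis_sortedEig (hX : X.IsHermitian) :
    ∃ b : OrthonormalBasis (Fin n) ℝ (En n),
      ∀ i, X.toEuclideanLin (b i) = sortedEig X i • b i := by
  refine ⟨hX.eigenvectorBasis.reindex (Tuple.sort hX.eigenvalues).symm, fun i ↦ ?_⟩
  rw [OrthonormalBasis.reindex_apply, Equiv.symm_symm, Matrix.toLpLin_apply,
    hX.mulVec_eigenvectorBasis, sortedEig, dif_pos hX]
  rfl

theorem exists_inner_toEuclideanLin_eq_sortedEig (hX : X.IsHermitian) (i : Fin n) :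
    ∃ v : En n, ‖v‖ = 1 ∧ ⟪v, X.toEuclideanLin v⟫ = sortedEig X i := by
  obtain ⟨b, hb⟩ := exists_orthonormalBasis_sortedEig hX
  refine ⟨b i, b.norm_eq_one i, ?_⟩
  rw [hb, real_inner_smul_right, real_inner_self_eq_norm_sq, b.norm_eq_one, one_pow, mul_one]

theorem sortedEig_zero_le_inner [NeZero n] (hX : X.IsHermitian) {w : En n} (hw : ‖w‖ = 1) :
    sortedEig X 0 ≤ ⟪w, X.toEuclideanLin w⟫ := by
  obtain ⟨b, hb⟩ := exists_orthonormalBasis_sortedEig hX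
  simpa only [hw, one_pow, mul_one] using
    le_inner_apply_self_of_eigenbasis hb (fun i ↦ monotone_sortedEig X (Fin.zero_le i)) w

theorem inner_le_sortedEig_lastIdx [NeZero n] (hX : X.IsHermitian) {w : En n} (hw : ‖w‖ = 1) :
    ⟪w, X.toEuclideanLin w⟫ ≤ sortedEig X (lastIdx n) := by
  obtain ⟨b, hb⟩ := exists_orthonormalBasis_sortedEig hX
  simpa only [hw, one_pow, mul_one] using
    inner_apply_self_le_of_eigenbasis hb (fun i ↦ monotone_sortedEig X (le_lastIdx i)) w

theorem hatA_nonneg {a : Fin n → ℝ} (ha : ∀ i, 0 ≤ a i) (k : Fin n) : 0 ≤ hatA a k :=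
  sub_nonneg.2 (Finset.single_le_sum (fun i _ ↦ ha i) (Finset.mem_univ k))

theorem sum_mul_le_add_hatA_mul {a l : Fin n → ℝ} {β : ℝ} (ha : ∀ i, 0 ≤ a i)
    (hl : ∀ i, l i ≤ β) (k : Fin n) : ∑ i, a i * l i ≤ a k * l k + hatA a k * β := by
  have h : a k * (β - l k) ≤ ∑ i, a i * (β - l i) :=
    Finset.single_le_sum (f := fun i ↦ a i * (β - l i))
      (fun i _ ↦ mul_nonneg (ha i) (sub_nonneg.2 (hl i))) (Finset.mem_univ k)
  simp only [mul_sub, Finset.sum_sub_distrib, ← Finset.sum_mul] at h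
  rw [hatA]
  linarith

theorem add_hatA_mul_le_sum_mul {a l : Fin n → ℝ} {β : ℝ} (ha : ∀ i, 0 ≤ a i)
    (hl : ∀ i, β ≤ l i) (k : Fin n) : a k * l k + hatA a k * β ≤ ∑ i, a i * l i := by
  have h := sum_mul_le_add_hatA_mul ha (fun i ↦ neg_le_neg (hl i)) k
  simp only [mul_neg, Finset.sum_neg_distrib] at h
  linarith

theorem Ma_le [NeZero n] {a : Fin n → ℝ} (ha : ∀ i, 0 ≤ a i) (hX : X.IsHermitian) {w : En n}
    (hw : ‖w‖ = 1) {β : ℝ} (hβ : ∀ y, ⟪y, X.toEuclideanLin y⟫ ≤ β * ‖y‖ ^ 2) :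
    Ma a X ≤ a 0 * ⟪w, X.toEuclideanLin w⟫ + hatA a 0 * β := by
  have hle : ∀ i, sortedEig X i ≤ β := fun i ↦ by
    obtain ⟨v, hv, hvi⟩ := exists_inner_toEuclideanLin_eq_sortedEig hX i
    simpa only [hvi, hv, one_pow, mul_one] using hβ v
  refine (sum_mul_le_add_hatA_mul ha hle 0).trans ?_
  gcongr
  · exact ha 0
  · exact sortedEig_zero_le_inner hX hw

theorem le_Ma [NeZero n] {a : Fin n → ℝ} (ha : ∀ i, 0 ≤ a i) (hX : X.IsHermitian) {w : En n}
    (hw : ‖w‖ = 1) {β : ℝ} (hβ : ∀ y, β * ‖y‖ ^ 2 ≤ ⟪y, X.toEuclideanLin y⟫) :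
    a (lastIdx n) * ⟪w, X.toEuclideanLin w⟫ + hatA a (lastIdx n) * β ≤ Ma a X := by
  have hle : ∀ i, β ≤ sortedEig X i := fun i ↦ by
    obtain ⟨v, hv, hvi⟩ := exists_inner_toEuclideanLin_eq_sortedEig hX i
    simpa only [hvi, hv, one_pow, mul_one] using hβ v
  refine le_trans ?_ (add_hatA_mul_le_sum_mul ha hle (lastIdx n))
  gcongr
  · exact ha _
  · exact inner_le_sortedEig_lastIdx hX hw

theorem isHermitian_hess {φ : En n → ℝ} (hφ : ContDiff ℝ 2 φ) (x : En n) :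
    (hess φ x).IsHermitian := by
  have hsymm : IsSymmSndFDerivAt ℝ φ x := hφ.contDiffAt.isSymmSndFDerivAt (by simp)
  ext i j
  simpa [hess, iteratedFDeriv_two_apply] using hsymm _ _

theorem inner_toEuclideanLin_hess (φ : En n → ℝ) (x y : En n) :
    ⟪y, (hess φ x).toEuclideanLin y⟫ = fderiv ℝ (fderiv ℝ φ) x y y := by
  have hy : ∑ i, y i • EuclideanSpace.single i (1 : ℝ) = y := by
    simpa using (EuclideanSpace.basisFun (Fin n) ℝ).sum_repr y
  calc ⟪y, (hess φ x).toEuclideanLin y⟫ = ∑ i, ∑ j, y i * (y j * hess φ x i j) := by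
        simp only [PiLp.inner_apply, Matrix.toLpLin_apply, Matrix.mulVec, dotProduct,
          RCLike.inner_apply, conj_trivial, Finset.sum_mul]
        exact Finset.sum_congr rfl fun i _ ↦ Finset.sum_congr rfl fun j _ ↦ by ring
    _ = fderiv ℝ (fderiv ℝ φ) x (∑ i, y i • EuclideanSpace.single i 1)
          (∑ j, y j • EuclideanSpace.single j 1) := by
        simp only [map_sum, map_smul, sum_apply, smul_apply,
          smul_eq_mul, Finset.mul_sum, hess, iteratedFDeriv_two_apply]
        rw [Finset.sum_comm]
        exact Finset.sum_congr rfl fun i _ ↦ Finset.sum_congr rfl fun j _ ↦ mul_left_comm _ _ _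
    _ = fderiv ℝ (fderiv ℝ φ) x y y := by rw [hy]

end SpectralBounds

section RadialHessian

theorem exists_contDiff_eventuallyEq_of_contDiffAt {E F : Type*} [NormedAddCommGroup E]
    [NormedSpace ℝ E] [HasContDiffBump E] [NormedAddCommGroup F] [NormedSpace ℝ F] {k : ℕ}
    {f : E → F} {x : E} (hf : ContDiffAt ℝ k f x) :
    ∃ g : E → F, ContDiff ℝ k g ∧ g =ᶠ[𝓝 x] f := by
  obtain ⟨r, hr, hball⟩ := Metric.eventually_nhds_iff_ball.1 (hf.eventually (by simp))
  let χ : ContDiffBump x := ⟨r / 4, r / 2, by positivity, by linarith⟩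
  refine ⟨fun y ↦ χ y • f y, contMDiff_iff_contDiff.1 (contMDiff_of_tsupport fun y hy ↦ ?_), ?_⟩
  · have hyχ : y ∈ closedBall x (r / 2) := by
      rw [← χ.tsupport_eq]
      exact closure_mono (Function.support_smul_subset_left _ _) hy
    exact (χ.contDiffAt.smul
      (hball y (closedBall_subset_ball (half_lt_self hr) hyχ))).contMDiffAt
  · filter_upwards [χ.eventuallyEq_one] with y hy
    rw [hy, Pi.one_apply, one_smul]

variable {E : Type*} [NormedAddCommGroup E] [InnerProductSpace ℝ E]

theorem hasFDerivAt_norm_sub_sq (z x : E) :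
    HasFDerivAt (fun x ↦ ‖x - z‖ ^ 2) (2 • innerSL ℝ (x - z)) x := by
  simpa using ((hasFDerivAt_id x).sub_const z).norm_sq

theorem fderiv_fderiv_comp_norm_sub_sq {g : ℝ → ℝ} {z x : E}
    (hg : ContDiffAt ℝ 2 g (‖x - z‖ ^ 2)) (y : E) :
    fderiv ℝ (fderiv ℝ fun x ↦ g (‖x - z‖ ^ 2)) x y y =
      2 * deriv g (‖x - z‖ ^ 2) * ‖y‖ ^ 2 +
        4 * deriv (deriv g) (‖x - z‖ ^ 2) * ⟪x - z, y⟫ ^ 2 := by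
  have hρ := hasFDerivAt_norm_sub_sq z x
  have hfd : fderiv ℝ (fun x ↦ g (‖x - z‖ ^ 2)) =ᶠ[𝓝 x]
      fun x ↦ deriv g (‖x - z‖ ^ 2) • 2 • innerSL ℝ (x - z) := by
    have hdiff := hρ.continuousAt.eventually (hg.eventually (by simp))
    filter_upwards [hdiff] with x' hx'
    exact ((hx'.differentiableAt two_ne_zero).hasDerivAt.comp_hasFDerivAt x'
      (hasFDerivAt_norm_sub_sq z x')).fderiv
  have hg' : HasDerivAt (deriv g) (deriv (deriv g) (‖x - z‖ ^ 2)) (‖x - z‖ ^ 2) :=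
    (((hg.fderiv_right (m := 1) le_rfl).differentiableAt one_ne_zero).clm_apply
      (differentiableAt_const 1)).hasDerivAt
  have hinner : HasFDerivAt (fun x' ↦ innerSL ℝ (x' - z)) (innerSL ℝ (E := E)) x :=
    (innerSL ℝ (E := E)).hasFDerivAt.comp x ((hasFDerivAt_id x).sub_const z)
  have hderiv := (hg'.comp_hasFDerivAt x hρ).fun_smul (hinner.fun_const_smul 2)
  simp only [Function.comp_apply] at hderiv
  rw [hfd.fderiv_eq, hderiv.fderiv]
  have hself : innerSL ℝ y y = ‖y‖ ^ 2 := real_inner_self_eq_norm_sq y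
  simp only [add_apply, smul_apply, ContinuousLinearMap.smulRight_apply, hself,
    innerSL_apply_apply, smul_eq_mul, nsmul_eq_mul, Nat.cast_ofNat]
  ring

theorem exists_norm_eq_one_inner_eq_zero (hE : 1 < Module.rank ℝ E) (v : E) :
    ∃ w : E, ‖w‖ = 1 ∧ ⟪v, w⟫ = 0 := by
  have hne : (ℝ ∙ v)ᗮ ≠ ⊥ := fun h ↦ by
    rw [Submodule.orthogonal_eq_bot_iff] at h
    have hle := rank_span_le (R := ℝ) {v}
    rw [h, rank_top, Cardinal.mk_singleton] at hle
    exact hE.not_ge hle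
  obtain ⟨w, hw, hw0⟩ := Submodule.exists_mem_ne_zero_of_ne_bot hne
  refine ⟨‖w‖⁻¹ • w, norm_smul_inv_norm (𝕜 := ℝ) hw0, ?_⟩
  rw [real_inner_smul_right, Submodule.mem_orthogonal_singleton_iff_inner_right.1 hw, mul_zero]

end RadialHessian

theorem hasDerivAt_log_one_add_sq_log {s : ℝ} (hs : s ≠ 0) :
    HasDerivAt (fun s ↦ Real.log (1 + Real.log s ^ 2))
      (2 * Real.log s / (s * (1 + Real.log s ^ 2))) s := by
  have hD : 1 + Real.log s ^ 2 ≠ 0 := by positivity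
  refine (((Real.hasDerivAt_log hs).fun_pow 2).const_add 1 |>.log hD).congr_deriv ?_
  simp only [Nat.cast_ofNat, Nat.add_one_sub_one, pow_one]
  field_simp

theorem hasDerivAt_deriv_log_one_add_sq_log {s : ℝ} (hs : s ≠ 0) :
    HasDerivAt (deriv fun s ↦ Real.log (1 + Real.log s ^ 2))
      ((2 * (1 - Real.log s ^ 2) / (1 + Real.log s ^ 2) ^ 2 -
        2 * Real.log s / (1 + Real.log s ^ 2)) / s ^ 2) s := by
  have hD : 1 + Real.log s ^ 2 ≠ 0 := by positivity
  have hlog := Real.hasDerivAt_log hs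
  have heq : (deriv fun s ↦ Real.log (1 + Real.log s ^ 2)) =ᶠ[𝓝 s]
      fun s ↦ 2 * Real.log s / (s * (1 + Real.log s ^ 2)) :=
    (eventually_ne_nhds hs).mono fun t ht ↦ (hasDerivAt_log_one_add_sq_log ht).deriv
  have hquot := (hlog.const_mul 2).fun_div
    ((hasDerivAt_id' s).fun_mul ((hlog.fun_pow 2).const_add 1)) (mul_ne_zero hs hD)
  refine (hquot.congr_deriv ?_).congr_of_eventuallyEq heq
  simp only [Nat.cast_ofNat, Nat.add_one_sub_one, pow_one]
  field_simp
  ring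

section RadialTest

variable {E : Type*} [NormedAddCommGroup E] [InnerProductSpace ℝ E]

/-- Viscosity subsolutions in `Ω` of `A λ_min(D²u) + B λ_max(D²u) = 0`. The eigenvalues are
replaced by a value `⟪w, D²φ w⟫ ≥ λ_min` at a unit vector `w` and by an upper bound `β ≥ λ_max` of
the quadratic form; for `A, B ≥ 0` this amounts to the same and makes sense in any
dimension. -/
def IsExtremalSubsol (A B : ℝ) (Ω : Set E) (u : E → ℝ) : Prop :=
  ∀ x₀ ∈ Ω, ∀ φ : E → ℝ, ContDiff ℝ 2 φ → IsLocalMaxOn (fun x ↦ u x - φ x) Ω x₀ →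
    ∀ (w : E) (β : ℝ), ‖w‖ = 1 → (∀ y, fderiv ℝ (fderiv ℝ φ) x₀ y y ≤ β * ‖y‖ ^ 2) →
      0 ≤ A * fderiv ℝ (fderiv ℝ φ) x₀ w w + B * β

variable {A B : ℝ} {Ω : Set E} {u : E → ℝ}

theorem IsExtremalSubsol.nonneg_of_contDiffAt (hu : IsExtremalSubsol A B Ω u) {x₀ : E}
    (hx₀ : x₀ ∈ Ω) {φ : E → ℝ} (hφ : ContDiffAt ℝ 2 φ x₀)
    (hmax : IsLocalMaxOn (fun x ↦ u x - φ x) Ω x₀)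
    {w : E} {β : ℝ} (hw : ‖w‖ = 1) (hβ : ∀ y, fderiv ℝ (fderiv ℝ φ) x₀ y y ≤ β * ‖y‖ ^ 2) :
    0 ≤ A * fderiv ℝ (fderiv ℝ φ) x₀ w w + B * β := by
  obtain ⟨ψ, hψ, heq⟩ := exists_contDiff_eventuallyEq_of_contDiffAt hφ
  have hmaxψ : IsLocalMaxOn (fun x ↦ u x - ψ x) Ω x₀ :=
    hmax.congr ((heq.filter_mono nhdsWithin_le_nhds).mono fun x hx ↦ by simp only [hx]) hx₀
  rw [← heq.fderiv.fderiv_eq] at hβ ⊢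
  exact hu x₀ hx₀ ψ hψ hmaxψ w β hw hβ

theorem IsExtremalSubsol.nonneg_of_radial (hu : IsExtremalSubsol A B Ω u) {x₀ z : E} (hx₀ : x₀ ∈ Ω)
    {g : ℝ → ℝ} {ε : ℝ} (hε : 0 < ε) (hg : ContDiffAt ℝ 2 g (‖x₀ - z‖ ^ 2))
    (hmax : IsLocalMaxOn (fun x ↦ u x - ε * g (‖x - z‖ ^ 2)) Ω x₀)
    {w : E} {β : ℝ} (hw : ‖w‖ = 1)
    (hβ : ∀ y, 2 * deriv g (‖x₀ - z‖ ^ 2) * ‖y‖ ^ 2 +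
      4 * deriv (deriv g) (‖x₀ - z‖ ^ 2) * ⟪x₀ - z, y⟫ ^ 2 ≤ β * ‖y‖ ^ 2) :
    0 ≤ A * (2 * deriv g (‖x₀ - z‖ ^ 2) + 4 * deriv (deriv g) (‖x₀ - z‖ ^ 2) * ⟪x₀ - z, w⟫ ^ 2) +
      B * β := by
  have hεg : ContDiffAt ℝ 2 (fun s ↦ ε * g s) (‖x₀ - z‖ ^ 2) := contDiffAt_const.mul hg
  have hφ : ContDiffAt ℝ 2 (fun x ↦ ε * g (‖x - z‖ ^ 2)) x₀ :=
    ContDiffAt.comp (f := fun x ↦ ‖x - z‖ ^ 2) x₀ hεg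
      ((contDiffAt_id.sub contDiffAt_const).norm_sq ℝ)
  have hess : ∀ y, fderiv ℝ (fderiv ℝ fun x ↦ ε * g (‖x - z‖ ^ 2)) x₀ y y =
      ε * (2 * deriv g (‖x₀ - z‖ ^ 2) * ‖y‖ ^ 2 +
        4 * deriv (deriv g) (‖x₀ - z‖ ^ 2) * ⟪x₀ - z, y⟫ ^ 2) := fun y ↦ by
    rw [fderiv_fderiv_comp_norm_sub_sq hεg, deriv_const_mul_field', deriv_const_mul_field]
    ring
  have h := hu.nonneg_of_contDiffAt (β := ε * β) hx₀ hφ hmax hw fun y ↦ by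
    rw [hess, mul_assoc ε]
    exact mul_le_mul_of_nonneg_left (hβ y) hε.le
  rw [hess, hw] at h
  exact nonneg_of_mul_nonneg_right (h.trans_eq (by ring)) hε

theorem IsExtremalSubsol.nonneg_of_radial_of_deriv_deriv_nonpos (hu : IsExtremalSubsol A B Ω u)
    {x₀ z : E} (hx₀ : x₀ ∈ Ω) (hz : x₀ ≠ z) {g : ℝ → ℝ} {ε : ℝ} (hε : 0 < ε)
    (hg : ContDiffAt ℝ 2 g (‖x₀ - z‖ ^ 2))
    (hmax : IsLocalMaxOn (fun x ↦ u x - ε * g (‖x - z‖ ^ 2)) Ω x₀)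
    (hg'' : deriv (deriv g) (‖x₀ - z‖ ^ 2) ≤ 0) :
    0 ≤ A * (2 * deriv g (‖x₀ - z‖ ^ 2) + 4 * deriv (deriv g) (‖x₀ - z‖ ^ 2) * ‖x₀ - z‖ ^ 2) +
      B * (2 * deriv g (‖x₀ - z‖ ^ 2)) := by
  have hinner : ⟪x₀ - z, ‖x₀ - z‖⁻¹ • (x₀ - z)⟫ = ‖x₀ - z‖ := by
    rw [real_inner_smul_right, real_inner_self_eq_norm_sq, sq,
      inv_mul_cancel_left₀ (norm_ne_zero_iff.2 (sub_ne_zero.2 hz))]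
  have h := hu.nonneg_of_radial (w := ‖x₀ - z‖⁻¹ • (x₀ - z)) (β := 2 * deriv g (‖x₀ - z‖ ^ 2))
    hx₀ hε hg hmax (norm_smul_inv_norm (𝕜 := ℝ) (sub_ne_zero.2 hz))
    fun y ↦ by nlinarith [sq_nonneg ⟪x₀ - z, y⟫]
  rwa [hinner] at h

theorem IsExtremalSubsol.nonneg_of_radial_of_deriv_deriv_nonneg (hu : IsExtremalSubsol A B Ω u)
    (hE : 1 < Module.rank ℝ E) {x₀ z : E} (hx₀ : x₀ ∈ Ω) {g : ℝ → ℝ} {ε : ℝ} (hε : 0 < ε)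
    (hg : ContDiffAt ℝ 2 g (‖x₀ - z‖ ^ 2))
    (hmax : IsLocalMaxOn (fun x ↦ u x - ε * g (‖x - z‖ ^ 2)) Ω x₀)
    (hg'' : 0 ≤ deriv (deriv g) (‖x₀ - z‖ ^ 2)) :
    0 ≤ A * (2 * deriv g (‖x₀ - z‖ ^ 2)) +
      B * (2 * deriv g (‖x₀ - z‖ ^ 2) + 4 * deriv (deriv g) (‖x₀ - z‖ ^ 2) * ‖x₀ - z‖ ^ 2) := by
  obtain ⟨w, hw, hinner⟩ := exists_norm_eq_one_inner_eq_zero hE (x₀ - z)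
  have h := hu.nonneg_of_radial (β := 2 * deriv g (‖x₀ - z‖ ^ 2) +
    4 * deriv (deriv g) (‖x₀ - z‖ ^ 2) * ‖x₀ - z‖ ^ 2) hx₀ hε hg hmax hw fun y ↦ by
      have hcs : ⟪x₀ - z, y⟫ ^ 2 ≤ ‖x₀ - z‖ ^ 2 * ‖y‖ ^ 2 := by
        rw [← mul_pow, ← sq_abs]
        exact pow_le_pow_left₀ (abs_nonneg _) (abs_real_inner_le_norm _ _) 2
      nlinarith
  rwa [hinner, zero_pow two_ne_zero, mul_zero, add_zero] at h

theorem IsExtremalSubsol.deriv_add_deriv_deriv_mul_nonneg (hA : 0 < A)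
    (hu : IsExtremalSubsol A A Ω u) (hE : 1 < Module.rank ℝ E) {x₀ z : E} (hx₀ : x₀ ∈ Ω)
    (hz : x₀ ≠ z) {g : ℝ → ℝ} {ε : ℝ} (hε : 0 < ε) (hg : ContDiffAt ℝ 2 g (‖x₀ - z‖ ^ 2))
    (hmax : IsLocalMaxOn (fun x ↦ u x - ε * g (‖x - z‖ ^ 2)) Ω x₀) :
    0 ≤ deriv g (‖x₀ - z‖ ^ 2) + deriv (deriv g) (‖x₀ - z‖ ^ 2) * ‖x₀ - z‖ ^ 2 := by
  rcases le_total (deriv (deriv g) (‖x₀ - z‖ ^ 2)) 0 with hg'' | hg''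
  · have h := hu.nonneg_of_radial_of_deriv_deriv_nonpos hx₀ hz hε hg hmax hg''
    exact nonneg_of_mul_nonneg_right (h.trans_eq (by ring)) (show 0 < 4 * A by positivity)
  · have h := hu.nonneg_of_radial_of_deriv_deriv_nonneg hE hx₀ hε hg hmax hg''
    exact nonneg_of_mul_nonneg_right (h.trans_eq (by ring)) (show 0 < 4 * A by positivity)

theorem IsExtremalSubsol.le_of_isLocalMaxOn_add_exp (hu : IsExtremalSubsol A B Ω u) {x₀ z : E}
    (hx₀ : x₀ ∈ Ω) (hz : x₀ ≠ z) {α ε : ℝ} (hα : 0 < α) (hε : 0 < ε)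
    (hmax : IsLocalMaxOn (fun x ↦ u x + ε * Real.exp (-α * ‖x - z‖ ^ 2)) Ω x₀) :
    2 * A * α * ‖x₀ - z‖ ^ 2 ≤ A + B := by
  set s := ‖x₀ - z‖ ^ 2
  have hd : deriv (fun s ↦ -Real.exp (-α * s)) = fun s ↦ α * Real.exp (-α * s) := by
    funext t
    have h : HasDerivAt (fun s ↦ -Real.exp (-α * s)) (-(Real.exp (-α * t) * (-α * 1))) t :=
      ((hasDerivAt_id t).const_mul (-α)).exp.neg
    rw [h.deriv]
    ring
  have hdd : deriv (fun s ↦ α * Real.exp (-α * s)) s = -(α ^ 2 * Real.exp (-α * s)) := by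
    have h : HasDerivAt (fun s ↦ α * Real.exp (-α * s)) (α * (Real.exp (-α * s) * (-α * 1))) s :=
      ((hasDerivAt_id s).const_mul (-α)).exp.const_mul α
    rw [h.deriv]
    ring
  have hdd_nonpos : deriv (deriv fun s ↦ -Real.exp (-α * s)) s ≤ 0 := by
    rw [hd, hdd]
    exact neg_nonpos.2 (by positivity)
  have h := hu.nonneg_of_radial_of_deriv_deriv_nonpos hx₀ hz hε (by fun_prop)
    (by simpa only [mul_neg, sub_neg_eq_add] using hmax) hdd_nonpos
  rw [hd, hdd] at h
  have hfactor : 0 ≤ 2 * α * Real.exp (-α * s) * (A + B - 2 * A * α * s) := h.trans_eq (by ring)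
  exact sub_nonneg.1 (nonneg_of_mul_nonneg_right hfactor (by positivity))

theorem IsExtremalSubsol.le_of_isLocalMaxOn_sub_rpow (hu : IsExtremalSubsol A B Ω u) {x₀ z : E}
    (hx₀ : x₀ ∈ Ω) (hz : x₀ ≠ z) {c ε : ℝ} (hc₀ : 0 < c) (hc₁ : c ≤ 1) (hε : 0 < ε)
    (hmax : IsLocalMaxOn (fun x ↦ u x - ε * (‖x - z‖ ^ 2) ^ c) Ω x₀) :
    A * (1 - 2 * c) ≤ B := by
  have hs : 0 < ‖x₀ - z‖ ^ 2 := pow_pos (norm_pos_iff.2 (sub_ne_zero.2 hz)) 2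
  set s := ‖x₀ - z‖ ^ 2
  have hd : deriv (fun s : ℝ ↦ s ^ c) = fun s ↦ c * s ^ (c - 1) := Real.deriv_rpow_const' c
  have hdd : deriv (fun s : ℝ ↦ c * s ^ (c - 1)) s = c * ((c - 1) * s ^ (c - 1 - 1)) := by
    simp only [deriv_const_mul_field, Real.deriv_rpow_const]
  have hdds : s ^ (c - 1 - 1) * s = s ^ (c - 1) := by
    rw [Real.rpow_sub_one hs.ne' (c - 1), div_mul_cancel₀ _ hs.ne']
  have h := hu.nonneg_of_radial_of_deriv_deriv_nonpos (g := fun s ↦ s ^ c) hx₀ hz hε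
    (Real.contDiffAt_rpow_const_of_ne hs.ne') hmax (by
      rw [hd, hdd]
      exact mul_nonpos_of_nonneg_of_nonpos hc₀.le
        (mul_nonpos_of_nonpos_of_nonneg (by linarith) (by positivity)))
  rw [hd, hdd] at h
  have hfactor : 0 ≤ 2 * c * s ^ (c - 1) * (B - A * (1 - 2 * c)) :=
    h.trans_eq (by linear_combination (4 * A * c * (c - 1)) * hdds)
  exact sub_nonneg.1 (nonneg_of_mul_nonneg_right hfactor (by positivity))

theorem IsExtremalSubsol.abs_log_le_of_isLocalMaxOn (hA : 0 < A) (hu : IsExtremalSubsol A A Ω u)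
    (hE : 1 < Module.rank ℝ E) {x₀ z : E} (hx₀ : x₀ ∈ Ω) (hz : x₀ ≠ z) {ε : ℝ} (hε : 0 < ε)
    (hmax : IsLocalMaxOn
      (fun x ↦ u x - ε * Real.log (1 + Real.log (‖x - z‖ ^ 2) ^ 2)) Ω x₀) :
    |Real.log (‖x₀ - z‖ ^ 2)| ≤ 1 := by
  have hs : 0 < ‖x₀ - z‖ ^ 2 := pow_pos (norm_pos_iff.2 (sub_ne_zero.2 hz)) 2
  have hD : 0 < 1 + Real.log (‖x₀ - z‖ ^ 2) ^ 2 := by positivity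
  have hg : ContDiffAt ℝ 2 (fun s ↦ Real.log (1 + Real.log s ^ 2)) (‖x₀ - z‖ ^ 2) :=
    (contDiffAt_const.add ((Real.contDiffAt_log.2 hs.ne').pow 2)).log hD.ne'
  have h := hu.deriv_add_deriv_deriv_mul_nonneg hA hE hx₀ hz hε hg hmax
  rw [(hasDerivAt_log_one_add_sq_log hs.ne').deriv,
    (hasDerivAt_deriv_log_one_add_sq_log hs.ne').deriv] at h
  set s := ‖x₀ - z‖ ^ 2
  have hfactor : 0 ≤ 2 / (s * (1 + Real.log s ^ 2) ^ 2) * (1 - Real.log s ^ 2) :=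
    h.trans_eq (by field_simp; ring)
  rw [← sq_le_one_iff_abs_le_one]
  exact sub_nonneg.1 (nonneg_of_mul_nonneg_right hfactor (by positivity))

end RadialTest

section Penalization

variable {X : Type*} [TopologicalSpace X] {Ω K : Set X} {u h : X → ℝ} {m M : ℝ}

theorem exists_isMaxOn_sub_mul (hne : Ω.Nonempty) (husc : UpperSemicontinuousOn u Ω)
    (hM : ∀ x ∈ Ω, u x ≤ M) (hh : ContinuousOn h Ω)
    (hsub : ∀ t, ∃ C ⊆ Ω, IsCompact C ∧ ∀ x ∈ Ω, h x ≤ t → x ∈ C) {ε : ℝ} (hε : 0 < ε) :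
    ∃ x ∈ Ω, IsMaxOn (fun x ↦ u x - ε * h x) Ω x := by
  obtain ⟨x₀, hx₀⟩ := hne
  obtain ⟨C, hCΩ, hC, hmem⟩ := hsub (h x₀ + (M - u x₀) / ε)
  have hx₀C : x₀ ∈ C :=
    hmem x₀ hx₀ (le_add_of_nonneg_right (div_nonneg (sub_nonneg.2 (hM x₀ hx₀)) hε.le))
  have huscC : UpperSemicontinuousOn (fun x ↦ u x - ε * h x) C := by
    have hcont : ContinuousOn (fun x ↦ -(ε * h x)) C :=
      (continuousOn_const.mul (hh.mono hCΩ)).neg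
    simpa only [sub_eq_add_neg] using (husc.mono hCΩ).add hcont.upperSemicontinuousOn
  obtain ⟨x₁, hx₁, hmax⟩ := huscC.exists_isMaxOn ⟨x₀, hx₀C⟩ hC
  refine ⟨x₁, hCΩ hx₁, fun x hx ↦ ?_⟩
  by_cases hxC : x ∈ C
  · exact hmax hxC
  · have hlarge : ε * (h x₀ + (M - u x₀) / ε) ≤ ε * h x :=
      mul_le_mul_of_nonneg_left (lt_of_not_ge fun hle ↦ hxC (hmem x hx hle)).le hε.le
    rw [mul_add, mul_div_cancel₀ _ hε.ne'] at hlarge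
    calc u x - ε * h x ≤ u x₀ - ε * h x₀ := by linarith [hM x hx]
      _ ≤ u x₁ - ε * h x₁ := hmax hx₀C

theorem le_of_isMaxOn_sub_mul_mem (husc : UpperSemicontinuousOn u Ω) (hM : ∀ x ∈ Ω, u x ≤ M)
    (hh : ContinuousOn h Ω) (hsub : ∀ t, ∃ C ⊆ Ω, IsCompact C ∧ ∀ x ∈ Ω, h x ≤ t → x ∈ C)
    (hmax : ∀ ε > 0, ∀ x ∈ Ω, IsMaxOn (fun x ↦ u x - ε * h x) Ω x → x ∈ K)
    (hK₀ : ∀ x ∈ K, 0 ≤ h x) (hKm : ∀ x ∈ K, u x ≤ m) {x : X} (hx : x ∈ Ω) : u x ≤ m := by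
  have hbound : ∀ ε > 0, u x - ε * h x ≤ m := fun ε hε ↦ by
    obtain ⟨y, hy, hymax⟩ := exists_isMaxOn_sub_mul ⟨x, hx⟩ husc hM hh hsub hε
    have hyK := hmax ε hε y hy hymax
    calc u x - ε * h x ≤ u y - ε * h y := hymax hx
      _ ≤ m := by linarith [hKm y hyK, mul_nonneg hε.le (hK₀ y hyK)]
  have hlim : Tendsto (fun ε ↦ u x - ε * h x) (𝓝[>] 0) (𝓝 (u x)) := by
    have hcont : ContinuousAt (fun ε ↦ u x - ε * h x) 0 := by fun_prop
    simpa using hcont.tendsto.mono_left nhdsWithin_le_nhds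
  exact le_of_tendsto hlim (eventually_mem_nhdsWithin.mono hbound)

end Penalization

section LogAnnulus

variable {E : Type*} [NormedAddCommGroup E]

/-- The closed annulus `exp (-N) ≤ ‖x - z‖² ≤ exp N`: the sublevel set of `|log ‖x - z‖²|` in the
punctured space. -/
def logAnnulus (z : E) (N : ℝ) : Set E :=
  {x | ‖x - z‖ ^ 2 ∈ Icc (Real.exp (-N)) (Real.exp N)}

theorem logAnnulus_subset_compl_singleton (z : E) (N : ℝ) : logAnnulus z N ⊆ {z}ᶜ := by
  rintro _ hx rfl
  exact (Real.exp_pos (-N)).not_ge (by simpa using hx.1)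

theorem mem_logAnnulus {z x : E} (hx : x ≠ z) {N : ℝ} :
    x ∈ logAnnulus z N ↔ |Real.log (‖x - z‖ ^ 2)| ≤ N := by
  have hs : 0 < ‖x - z‖ ^ 2 := pow_pos (norm_pos_iff.2 (sub_ne_zero.2 hx)) 2
  rw [abs_le, Real.le_log_iff_exp_le hs, Real.log_le_iff_le_exp hs]
  rfl

theorem isCompact_logAnnulus [ProperSpace E] (z : E) (N : ℝ) : IsCompact (logAnnulus z N) := by
  refine (isCompact_closedBall z √(Real.exp N)).of_isClosed_subset
    (isClosed_Icc.preimage (by fun_prop)) fun x hx ↦ ?_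
  exact mem_closedBall_iff_norm.2 (Real.le_sqrt_of_sq_le hx.2)

theorem nonempty_logAnnulus [NormedSpace ℝ E] [Nontrivial E] (z : E) {N : ℝ} (hN : 0 ≤ N) :
    (logAnnulus z N).Nonempty := by
  obtain ⟨w, hw⟩ := exists_norm_eq E zero_le_one
  exact ⟨z + w, by simp [logAnnulus, hw, hN]⟩

end LogAnnulus

section Liouville

theorem exists_isMaxOn_add_exp {E : Type*} [NormedAddCommGroup E] [ProperSpace E]
    {u : E → ℝ} {z k : E} {R : ℝ} (husc : UpperSemicontinuousOn u (closedBall z R))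
    (hk : k ∈ ball z R) (hmax : IsMaxOn u (closedBall z R) k) (hlt : u z < u k) :
    ∃ r > 0, ∀ α > 0, ∃ ε > 0, ∃ x ∈ ball z R, r ≤ ‖x - z‖ ∧
      IsMaxOn (fun x ↦ u x + ε * Real.exp (-α * ‖x - z‖ ^ 2)) (closedBall z R) x := by
  obtain ⟨m, hzm, hmk⟩ := exists_between hlt
  have hR : 0 < R := pos_of_mem_ball hk
  obtain ⟨r, hr, hrm⟩ : ∃ r > 0, ∀ x ∈ ball z r, u x < m := by
    have hev := husc z (mem_closedBall_self hR.le) m hzm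
    rw [nhdsWithin_eq_nhds.2 (closedBall_mem_nhds z hR)] at hev
    exact Metric.eventually_nhds_iff_ball.1 hev
  refine ⟨r, hr, fun α hα ↦ ⟨u k - m, sub_pos.2 hmk, ?_⟩⟩
  have huscE : UpperSemicontinuousOn
      (fun x ↦ u x + (u k - m) * Real.exp (-α * ‖x - z‖ ^ 2)) (closedBall z R) :=
    husc.add (Continuous.continuousOn (by fun_prop)).upperSemicontinuousOn
  obtain ⟨x, hx, hxmax⟩ :=
    huscE.exists_isMaxOn ⟨z, mem_closedBall_self hR.le⟩ (isCompact_closedBall z R)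
  have hkx : u k + (u k - m) * Real.exp (-α * ‖k - z‖ ^ 2) ≤
    u x + (u k - m) * Real.exp (-α * ‖x - z‖ ^ 2) := hxmax (ball_subset_closedBall hk)
  refine ⟨x, ?_, ?_, hxmax⟩
  · rw [mem_ball_iff_norm] at hk ⊢
    have hexp : Real.exp (-α * ‖k - z‖ ^ 2) ≤ Real.exp (-α * ‖x - z‖ ^ 2) :=
      le_of_mul_le_mul_left (by linarith [show u x ≤ u k from hmax hx]) (sub_pos.2 hmk)
    have hsq : ‖x - z‖ ^ 2 ≤ ‖k - z‖ ^ 2 := by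
      nlinarith [Real.exp_le_exp.1 hexp]
    exact (le_of_sq_le_sq hsq (norm_nonneg _)).trans_lt hk
  · by_contra! hxr
    have hexp : Real.exp (-α * ‖x - z‖ ^ 2) ≤ 1 :=
      Real.exp_le_one_iff.2 (by nlinarith [sq_nonneg ‖x - z‖])
    have hxm : u x + (u k - m) * Real.exp (-α * ‖x - z‖ ^ 2) < u k :=
      calc _ < m + (u k - m) * 1 :=
            add_lt_add_of_lt_of_le (hrm x (mem_ball_iff_norm.2 hxr))
              (mul_le_mul_of_nonneg_left hexp (sub_pos.2 hmk).le)
        _ = u k := by ring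
    have hpos : 0 < (u k - m) * Real.exp (-α * ‖k - z‖ ^ 2) :=
      mul_pos (sub_pos.2 hmk) (Real.exp_pos _)
    linarith

variable {E : Type*} [NormedAddCommGroup E] [InnerProductSpace ℝ E] [FiniteDimensional ℝ E]
  {A B : ℝ} {Ω : Set E} {u : E → ℝ}

theorem IsExtremalSubsol.eq_of_isMaxOn_closedBall (hA : 0 < A) (hB : 0 ≤ B)
    (hu : IsExtremalSubsol A B Ω u) {z k : E} {R : ℝ} (hΩ : closedBall z R ⊆ Ω)
    (husc : UpperSemicontinuousOn u (closedBall z R)) (hk : k ∈ ball z R)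
    (hmax : IsMaxOn u (closedBall z R) k) : u z = u k := by
  by_contra hne
  have hlt : u z < u k :=
    (hmax (mem_closedBall_self (pos_of_mem_ball hk).le)).lt_of_ne hne
  obtain ⟨r, hr, hbarrier⟩ := exists_isMaxOn_add_exp husc hk hmax hlt
  obtain ⟨ε, hε, x, hx, hrx, hxmax⟩ := hbarrier ((A + B) / (A * r ^ 2)) (by positivity)
  have hxz : x ≠ z := sub_ne_zero.1 (norm_pos_iff.1 (hr.trans_le hrx))
  have hlocal := (hxmax.isLocalMax (closedBall_mem_nhds_of_mem hx)).on Ω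
  have hle := hu.le_of_isLocalMaxOn_add_exp (hΩ (ball_subset_closedBall hx)) hxz (by positivity) hε
    hlocal
  have hge : 2 * (A + B) ≤ 2 * A * ((A + B) / (A * r ^ 2)) * ‖x - z‖ ^ 2 :=
    calc 2 * (A + B) = 2 * A * ((A + B) / (A * r ^ 2)) * r ^ 2 := by field_simp
      _ ≤ 2 * A * ((A + B) / (A * r ^ 2)) * ‖x - z‖ ^ 2 := by gcongr
  linarith

theorem IsExtremalSubsol.eq_of_isMaxOn (hA : 0 < A) (hB : 0 ≤ B)
    (hu : IsExtremalSubsol A B Ω u) (hΩ : IsOpen Ω) (hconn : IsPreconnected Ω)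
    (husc : UpperSemicontinuousOn u Ω) {k : E} (hk : k ∈ Ω) (hmax : IsMaxOn u Ω k) {x : E}
    (hx : x ∈ Ω) : u x = u k := by
  have hlocal : ∀ x ∈ Ω, ∀ᶠ y in 𝓝[Ω] x, (u x = u k ↔ u y = u k) := fun x hx ↦ by
    by_cases hxk : u x = u k
    · obtain ⟨ρ, hρ, hball⟩ := Metric.nhds_basis_closedBall.mem_iff.1 (hΩ.mem_nhds hx)
      refine nhdsWithin_le_nhds (mem_of_superset (ball_mem_nhds x (half_pos hρ)) fun y hy ↦ ?_)
      have hyΩ : closedBall y (ρ / 2) ⊆ Ω :=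
        (closedBall_subset_closedBall' (by linarith [mem_ball.1 hy])).trans hball
      have hyx := hu.eq_of_isMaxOn_closedBall hA hB hyΩ (husc.mono hyΩ) (mem_ball_comm.1 hy)
        fun w hw ↦ (hmax (hyΩ hw)).trans_eq hxk.symm
      exact iff_of_true hxk (hyx.trans hxk)
    · have hlt : u x < u k := (hmax hx).lt_of_ne hxk
      exact (husc x hx (u k) hlt).mono fun y hy ↦ iff_of_false hxk hy.ne
  exact (hconn.induction₂ (fun x y ↦ u x = u k ↔ u y = u k) hlocal
    (fun _ _ _ _ _ _ ↦ Iff.trans) (fun _ _ _ _ ↦ Iff.symm) hk hx).1 rfl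

theorem IsExtremalSubsol.exists_forall_eq (hB : 0 ≤ B) (hBA : B < A)
    (hu : IsExtremalSubsol A B univ u) (husc : UpperSemicontinuous u) (hM : ∃ M, ∀ x, u x ≤ M) :
    ∃ k, ∀ x, u x = k := by
  obtain ⟨M, hM⟩ := hM
  have hA : 0 < A := hB.trans_lt hBA
  obtain ⟨c, hc₀, hc₁, hc⟩ : ∃ c : ℝ, 0 < c ∧ c ≤ 1 ∧ B < A * (1 - 2 * c) :=
    ⟨(A - B) / (4 * A), div_pos (sub_pos.2 hBA) (by positivity),
      (div_le_one (by positivity)).2 (by linarith), by field_simp; linarith⟩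
  have hle : ∀ x y, u x ≤ u y := fun x y ↦ by
    refine le_of_isMaxOn_sub_mul_mem (h := fun x ↦ (‖x - y‖ ^ 2) ^ c) (K := {y})
      (husc.upperSemicontinuousOn univ) (fun x _ ↦ hM x) ?_ (fun t ↦ ?_) (fun ε hε x _ hmax ↦ ?_)
      (fun x _ ↦ by positivity) (fun x hx ↦ (congrArg u hx).le) (mem_univ x)
    · exact ContinuousOn.rpow_const (by fun_prop) fun _ _ ↦ Or.inr hc₀.le
    · refine ⟨closedBall y √(|t| ^ c⁻¹), subset_univ _, isCompact_closedBall _ _, fun x _ hx ↦ ?_⟩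
      rw [mem_closedBall_iff_norm]
      exact Real.le_sqrt_of_sq_le ((Real.le_rpow_inv_iff_of_pos (by positivity) (abs_nonneg t)
        hc₀).2 (hx.trans (le_abs_self t)))
    · by_contra hxy
      exact hc.not_ge (hu.le_of_isLocalMaxOn_sub_rpow (mem_univ x) hxy hc₀ hc₁ hε hmax.localize)
  exact ⟨u 0, fun x ↦ (hle x 0).antisymm (hle 0 x)⟩

theorem IsExtremalSubsol.exists_isMaxOn_compl_singleton (hA : 0 < A) (hE : 1 < Module.rank ℝ E)
    {z : E} (hu : IsExtremalSubsol A A {z}ᶜ u) (husc : UpperSemicontinuousOn u {z}ᶜ)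
    (hM : ∃ M, ∀ x ≠ z, u x ≤ M) : ∃ k ∈ ({z}ᶜ : Set E), IsMaxOn u {z}ᶜ k := by
  obtain ⟨M, hM⟩ := hM
  have : Nontrivial E := rank_pos_iff_nontrivial.1 (zero_lt_one.trans hE)
  have hsub := logAnnulus_subset_compl_singleton z
  obtain ⟨k, hk, hkmax⟩ := (husc.mono (hsub 1)).exists_isMaxOn
    (nonempty_logAnnulus z zero_le_one) (isCompact_logAnnulus z 1)
  refine ⟨k, hsub 1 hk, fun x hx ↦ ?_⟩
  refine le_of_isMaxOn_sub_mul_mem (h := fun x ↦ Real.log (1 + Real.log (‖x - z‖ ^ 2) ^ 2))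
    (K := logAnnulus z 1) husc hM ?_ (fun t ↦ ?_) (fun ε hε x hx hmax ↦ ?_)
    (fun x _ ↦ Real.log_nonneg (le_add_of_nonneg_right (sq_nonneg _))) (fun x hx ↦ hkmax hx) hx
  · have hne : ∀ x ∈ ({z}ᶜ : Set E), ‖x - z‖ ^ 2 ≠ 0 := fun x hx ↦
      pow_ne_zero 2 (norm_ne_zero_iff.2 (sub_ne_zero.2 hx))
    exact ContinuousOn.log (continuousOn_const.add ((ContinuousOn.log (by fun_prop) hne).pow 2))
      fun x _ ↦ by positivity
  · refine ⟨logAnnulus z √(Real.exp t), hsub _, isCompact_logAnnulus _ _, fun x hx hxt ↦ ?_⟩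
    rw [Real.log_le_iff_le_exp (by positivity)] at hxt
    exact (mem_logAnnulus hx).2 (Real.abs_le_sqrt (by linarith))
  · exact (mem_logAnnulus hx).2 (hu.abs_log_le_of_isLocalMaxOn hA hE hx hx hε hmax.localize)

theorem IsExtremalSubsol.exists_forall_ne_eq (hA : 0 < A) (hE : 1 < Module.rank ℝ E) {z : E}
    (hu : IsExtremalSubsol A A {z}ᶜ u) (husc : UpperSemicontinuousOn u {z}ᶜ)
    (hM : ∃ M, ∀ x ≠ z, u x ≤ M) : ∃ k, ∀ x ≠ z, u x = k := by
  obtain ⟨k, hk, hmax⟩ := hu.exists_isMaxOn_compl_singleton hA hE husc hM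
  exact ⟨u k, fun x hx ↦ hu.eq_of_isMaxOn hA hA.le isOpen_compl_singleton
    (isConnected_compl_singleton_of_one_lt_rank hE z).isPreconnected husc hk hmax hx⟩

end Liouville

section ViscositySolutions

variable {n : ℕ} {a : Fin n → ℝ} {Ω : Set (En n)} {u v : En n → ℝ}

theorem IsViscSubsol.isExtremalSubsol [NeZero n] (ha : ∀ i, 0 ≤ a i)
    (hu : IsViscSubsol a Ω (fun _ => 0) u) : IsExtremalSubsol (a 0) (hatA a 0) Ω u := by
  intro x₀ hx₀ φ hφ hmax w β hw hβ
  simp only [← inner_toEuclideanLin_hess] at hβ ⊢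
  exact (hu x₀ hx₀ φ hφ hmax).trans (Ma_le ha (isHermitian_hess hφ x₀) hw hβ)

theorem IsViscSupersol.isExtremalSubsol_neg [NeZero n] (ha : ∀ i, 0 ≤ a i)
    (hv : IsViscSupersol a Ω (fun _ => 0) v) :
    IsExtremalSubsol (a (lastIdx n)) (hatA a (lastIdx n)) Ω (-v) := by
  intro x₀ hx₀ φ hφ hmax w β hw hβ
  have hmin : IsLocalMinOn (fun x ↦ v x - (-φ) x) Ω x₀ := by
    simpa only [Pi.neg_apply, neg_sub, sub_neg_eq_add, neg_add_rev, neg_neg, add_comm]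
      using hmax.neg
  have hneg : ∀ y, fderiv ℝ (fderiv ℝ (-φ)) x₀ y y = -fderiv ℝ (fderiv ℝ φ) x₀ y y := fun y ↦ by
    rw [show fderiv ℝ (-φ) = -fderiv ℝ φ from funext fun x ↦ fderiv_neg, fderiv_neg]
    rfl
  have hφn : ContDiff ℝ 2 (-φ) := hφ.neg
  have hle := (le_Ma (β := -β) ha (isHermitian_hess hφn x₀) hw fun y ↦ by
    rw [inner_toEuclideanLin_hess, hneg, neg_mul]
    exact neg_le_neg (hβ y)).trans (hv x₀ hx₀ (-φ) hφn hmin)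
  rw [inner_toEuclideanLin_hess, hneg] at hle
  linarith

theorem ClassAbar.pos_of_hatA_eq (ha : ClassAbar a) {k : Fin n} (hk : hatA a k = a k) :
    0 < a k := by
  have hsum : 0 < ∑ i, a i :=
    let ⟨i, hi⟩ := ha.2
    Finset.sum_pos' (fun i _ ↦ ha.1 i) ⟨i, Finset.mem_univ i, hi⟩
  rw [hatA] at hk
  linarith

theorem ClassAbar.one_lt_rank_of_hatA_eq (ha : ClassAbar a) {k : Fin n} (hk : hatA a k = a k) :
    1 < Module.rank ℝ (En n) := by
  have hpos := ha.pos_of_hatA_eq hk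
  have hn : 1 < n := by
    by_contra! hn
    have : Subsingleton (Fin n) := Fin.subsingleton_iff_le_one.2 hn
    rw [hatA, Fintype.sum_subsingleton a k, sub_self] at hk
    exact hpos.ne hk
  rw [← Module.finrank_eq_rank, finrank_euclideanSpace_fin]
  exact_mod_cast hn

end ViscositySolutions

/-- **Unilateral Liouville property (Theorem 7.2).** Let `M_a ∈ 𝒜̄` and
`â_j = (a₁+⋯+aₙ) − a_j`. (i) If `a₁ = â₁`, any usc viscosity subsolution of
`M_a(D²u) = 0` in `ℝⁿ∖{0}` that is bounded above is constant. (ii) If `a₁ > â₁`, any usc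
viscosity subsolution in all of `ℝⁿ` that is bounded above is constant. (iii)–(iv) Dual
statements for supersolutions bounded below, with `aₙ` and `âₙ`. -/
theorem unilateral_liouville (n : ℕ) [NeZero n] (a : Fin n → ℝ) (ha : ClassAbar a) :
    (hatA a 0 = a 0 →
      ∀ u : En n → ℝ, UpperSemicontinuousOn u {(0 : En n)}ᶜ →
        IsViscSubsol a {(0 : En n)}ᶜ (fun _ => 0) u →
        (∃ M, ∀ x : En n, x ≠ 0 → u x ≤ M) →
        ∃ k : ℝ, ∀ x : En n, x ≠ 0 → u x = k) ∧
    (hatA a 0 < a 0 →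
      ∀ u : En n → ℝ, UpperSemicontinuous u →
        IsViscSubsol a Set.univ (fun _ => 0) u →
        (∃ M, ∀ x, u x ≤ M) →
        ∃ k : ℝ, ∀ x, u x = k) ∧
    (hatA a (lastIdx n) = a (lastIdx n) →
      ∀ v : En n → ℝ, LowerSemicontinuousOn v {(0 : En n)}ᶜ →
        IsViscSupersol a {(0 : En n)}ᶜ (fun _ => 0) v →
        (∃ M, ∀ x : En n, x ≠ 0 → M ≤ v x) →
        ∃ k : ℝ, ∀ x : En n, x ≠ 0 → v x = k) ∧
    (hatA a (lastIdx n) < a (lastIdx n) →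
      ∀ v : En n → ℝ, LowerSemicontinuous v →
        IsViscSupersol a Set.univ (fun _ => 0) v →
        (∃ M, ∀ x, M ≤ v x) →
        ∃ k : ℝ, ∀ x, v x = k) := by
  refine ⟨fun h u husc hu hM ↦ ?_, fun h u husc hu hM ↦ ?_,
    fun h v hlsc hv ⟨M, hM⟩ ↦ ?_, fun h v hlsc hv ⟨M, hM⟩ ↦ ?_⟩
  · have hu' := hu.isExtremalSubsol ha.1
    rw [h] at hu'
    exact hu'.exists_forall_ne_eq (ha.pos_of_hatA_eq h) (ha.one_lt_rank_of_hatA_eq h) husc hM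
  · exact (hu.isExtremalSubsol ha.1).exists_forall_eq (hatA_nonneg ha.1 0) h husc hM
  · have hv' := hv.isExtremalSubsol_neg ha.1
    rw [h] at hv'
    obtain ⟨k, hk⟩ := hv'.exists_forall_ne_eq (ha.pos_of_hatA_eq h)
      (ha.one_lt_rank_of_hatA_eq h) hlsc.neg ⟨-M, fun x hx ↦ neg_le_neg (hM x hx)⟩
    exact ⟨-k, fun x hx ↦ neg_eq_iff_eq_neg.1 (hk x hx)⟩
  · obtain ⟨k, hk⟩ := (hv.isExtremalSubsol_neg ha.1).exists_forall_eq
      (hatA_nonneg ha.1 (lastIdx n)) h hlsc.neg ⟨-M, fun x ↦ neg_le_neg (hM x)⟩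
    exact ⟨-k, fun x ↦ neg_eq_iff_eq_neg.1 (hk x)⟩
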